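/- arXiv:2601.15449 — 2 statements merged into one kernel-verified Lean document; each statement's English description precedes it below -/
import Mathlib

section
/- Let (Ω, ℱ, P) be a probability space with random variables Z, A_0, A_1 : Ω → {0,1} and integrable Y_0, Y_1 : Ω → ℝ. Define observed treatment A = Z A_1 + (1−Z) A_0 and observed outcome Y = A Y_1 + (1−A) Y_0. Assume: (i) Z is independent of the vector (A_0, A_1, Y_0, Y_1); (ii) monotonicity: A_1 ≥ A_0 almost surely; (iii) relevance: P(A_1 = 1, A_0 = 0) > 0; and (iv) 0 < P(Z = 1) < 1. Then E[Y | Z = 1] − E[Y | Z = 0] = E[(Y_1 − Y_0) · 1{A_1 = 1, A_0 = 0}] and E[A | Z = 1] − E[A | Z = 0] = P(A_1 = 1, A_0 = 0), so the Wald ratio identifies the local average treatment effect: (E[Y | Z = 1] − E[Y | Z = 0]) / (E[A | Z = 1] − E[A | Z = 0]) = E[Y_1 − Y_0 | A_1 = 1, A_0 = 0]. -/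
open MeasureTheory ProbabilityTheory

lemma cond_integral_aux {Ω E : Type*} [MeasurableSpace Ω] [MeasurableSpace E] (μ : Measure Ω)
    [IsProbabilityMeasure μ] (Z : Ω → ℝ) (V : Ω → E) (hZ : Measurable Z) (hV : Measurable V)
    (h : IndepFun Z V μ) (g : E → ℝ) (hg : Measurable g) (F : Ω → ℝ) (z : ℝ)
    (hz : μ {x | Z x = z} ≠ 0) (hF : ∀ x, Z x = z → F x = g (V x)) :
    ∫ x, F x ∂(μ[|{x | Z x = z}]) = ∫ x, g (V x) ∂μ := by
  have hS : MeasurableSet {x | Z x = z} := hZ (measurableSet_singleton z)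
  have h1 : ∫ x, F x ∂(μ[|{x | Z x = z}]) = ∫ x, g (V x) ∂(μ[|{x | Z x = z}]) :=
    integral_congr_ae (ae_cond_of_forall_mem hS hF)
  have h2 : ∫ x in {x | Z x = z}, g (V x) ∂μ = μ.real {x | Z x = z} * ∫ x, g (V x) ∂μ :=
    Indep.setIntegral_eq_mul hZ.comap_le h hV.aemeasurable
      ⟨{z}, measurableSet_singleton z, rfl⟩ hg.aestronglyMeasurable
  have h3 : (μ {x | Z x = z}).toReal ≠ 0 := by
    simp [ENNReal.toReal_eq_zero_iff, hz]
  rw [h1, ProbabilityTheory.cond, integral_smul_measure, h2, ENNReal.toReal_inv, Measure.real, smul_eq_mul]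
  field_simp

/-- Identification of the local average treatment effect: under independence of the instrument,
monotonicity, relevance, and a nondegenerate instrument, the Wald ratio equals the average
treatment effect among compliers. -/
theorem stmt_17 {Ω : Type*} [MeasurableSpace Ω] (μ : Measure Ω) [IsProbabilityMeasure μ]
    (Z A₀ A₁ Y₀ Y₁ : Ω → ℝ)
    (hZmeas : Measurable Z) (hA₀meas : Measurable A₀) (hA₁meas : Measurable A₁)
    (hY₀meas : Measurable Y₀) (hY₁meas : Measurable Y₁)
    (hZ01 : ∀ x, Z x = 0 ∨ Z x = 1) (hA₀01 : ∀ x, A₀ x = 0 ∨ A₀ x = 1)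
    (hA₁01 : ∀ x, A₁ x = 0 ∨ A₁ x = 1)
    (hY₀int : Integrable Y₀ μ) (hY₁int : Integrable Y₁ μ)
    (A Y : Ω → ℝ)
    (hA : ∀ x, A x = Z x * A₁ x + (1 - Z x) * A₀ x)
    (hY : ∀ x, Y x = A x * Y₁ x + (1 - A x) * Y₀ x)
    (hindep : IndepFun Z (fun x => (A₀ x, A₁ x, Y₀ x, Y₁ x)) μ)
    (hmono : ∀ᵐ x ∂μ, A₀ x ≤ A₁ x)
    (hrel : 0 < μ {x | A₁ x = 1 ∧ A₀ x = 0})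
    (hZpos : 0 < μ {x | Z x = 1}) (hZlt : μ {x | Z x = 1} < 1) :
    (∫ x, Y x ∂(μ[|{x | Z x = 1}])) - (∫ x, Y x ∂(μ[|{x | Z x = 0}]))
        = ∫ x, Set.indicator {x | A₁ x = 1 ∧ A₀ x = 0} (fun x => Y₁ x - Y₀ x) x ∂μ
    ∧ (∫ x, A x ∂(μ[|{x | Z x = 1}])) - (∫ x, A x ∂(μ[|{x | Z x = 0}]))
        = (μ {x | A₁ x = 1 ∧ A₀ x = 0}).toReal
    ∧ ((∫ x, Y x ∂(μ[|{x | Z x = 1}])) - (∫ x, Y x ∂(μ[|{x | Z x = 0}])))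
        / ((∫ x, A x ∂(μ[|{x | Z x = 1}])) - (∫ x, A x ∂(μ[|{x | Z x = 0}])))
        = ∫ x, (Y₁ x - Y₀ x) ∂(μ[|{x | A₁ x = 1 ∧ A₀ x = 0}]) := by
  have hV : Measurable (fun x => (A₀ x, A₁ x, Y₀ x, Y₁ x)) := by fun_prop
  have hZ1 : μ {x | Z x = 1} ≠ 0 := hZpos.ne'
  have hS1 : MeasurableSet {x | Z x = 1} := hZmeas (measurableSet_singleton 1)
  have hZ0 : μ {x | Z x = 0} ≠ 0 := by
    intro h0
    have hc : {x | Z x = 1}ᶜ = {x | Z x = 0} := by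
      ext x
      rcases hZ01 x with h | h <;> simp [h]
    rw [← hc, prob_compl_eq_zero_iff hS1] at h0
    exact hZlt.ne h0
  have hC : MeasurableSet {x | A₁ x = 1 ∧ A₀ x = 0} :=
    (hA₁meas (measurableSet_singleton 1)).inter (hA₀meas (measurableSet_singleton 0))
  have eY1 := cond_integral_aux μ Z _ hZmeas hV hindep
    (fun v => v.2.1 * v.2.2.2 + (1 - v.2.1) * v.2.2.1) (by fun_prop) Y 1 hZ1
    (by intro x hx; simp [hY, hA, hx])
  have eY0 := cond_integral_aux μ Z _ hZmeas hV hindep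
    (fun v => v.1 * v.2.2.2 + (1 - v.1) * v.2.2.1) (by fun_prop) Y 0 hZ0
    (by intro x hx; simp [hY, hA, hx])
  have eA1 := cond_integral_aux μ Z _ hZmeas hV hindep
    (fun v => v.2.1) (by fun_prop) A 1 hZ1 (by intro x hx; simp [hA, hx])
  have eA0 := cond_integral_aux μ Z _ hZmeas hV hindep
    (fun v => v.1) (by fun_prop) A 0 hZ0 (by intro x hx; simp [hA, hx])
  have iA : ∀ B : Ω → ℝ, Measurable B → (∀ x, B x = 0 ∨ B x = 1) → Integrable B μ := by
    intro B hB hB01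
    refine Integrable.of_bound hB.aestronglyMeasurable 1 (ae_of_all _ fun x => ?_)
    rcases hB01 x with h | h <;> simp [h]
  have iY : ∀ B : Ω → ℝ, Measurable B → (∀ x, B x = 0 ∨ B x = 1) →
      Integrable (fun x => B x * Y₁ x + (1 - B x) * Y₀ x) μ := by
    intro B hB hB01
    refine (hY₁int.norm.add hY₀int.norm).mono' (by fun_prop) (ae_of_all _ fun x => ?_)
    rcases hB01 x with h | h <;> simp [h]
  have p1 : (∫ x, Y x ∂(μ[|{x | Z x = 1}])) - (∫ x, Y x ∂(μ[|{x | Z x = 0}]))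
        = ∫ x, Set.indicator {x | A₁ x = 1 ∧ A₀ x = 0} (fun x => Y₁ x - Y₀ x) x ∂μ := by
    rw [eY1, eY0, ← integral_sub (iY A₁ hA₁meas hA₁01) (iY A₀ hA₀meas hA₀01)]
    refine integral_congr_ae ?_
    filter_upwards [hmono] with x hx
    rcases hA₀01 x with h | h <;> rcases hA₁01 x with h' | h' <;>
      simp [Set.indicator, h, h']
    rw [h, h'] at hx
    norm_num at hx
  have p2 : (∫ x, A x ∂(μ[|{x | Z x = 1}])) - (∫ x, A x ∂(μ[|{x | Z x = 0}]))
        = (μ {x | A₁ x = 1 ∧ A₀ x = 0}).toReal := by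
    rw [eA1, eA0, ← integral_sub (iA A₁ hA₁meas hA₁01) (iA A₀ hA₀meas hA₀01)]
    change _ = μ.real _
    rw [← integral_indicator_one hC]
    refine integral_congr_ae ?_
    filter_upwards [hmono] with x hx
    rcases hA₀01 x with h | h <;> rcases hA₁01 x with h' | h' <;>
      simp [Set.indicator, h, h']
    rw [h, h'] at hx
    norm_num at hx
  refine ⟨p1, p2, ?_⟩
  rw [p1, p2, integral_indicator hC, ProbabilityTheory.cond, integral_smul_measure, ENNReal.toReal_inv, smul_eq_mul,
    div_eq_inv_mul]
end

section
/- Let (Ω, ℱ, P) be a probability space, X : Ω → ℝ^d a random vector generating the σ-algebra σ(X), Z : Ω → {0,1} a treatment indicator, and Y_0, Y_1 : Ω → ℝ bounded random variables with observed outcome Y = Z Y_1 + (1−Z) Y_0. Suppose there is a measurable function e : ℝ^d → ℝ and a constant c ∈ (0, 1/2) such that c ≤ e(x) ≤ 1 − c for all x, E[Z | σ(X)] = e(X) almost surely, and the pair (Y_0, Y_1) is conditionally independent of Z given σ(X). Then E[Z Y / e(X) − (1−Z) Y / (1 − e(X))] = E[Y_1 − Y_0]; that is, the inverse-probability-weighted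 contrast identifies the average treatment effect τ = E[Y_1 − Y_0]. -/
open MeasureTheory ProbabilityTheory

/-- Conditional expectation of a product of conditionally independent real variables. -/
lemma condExp_mul_of_condIndepFun {Ω : Type*} {m mΩ : MeasurableSpace Ω} [StandardBorelSpace Ω]
    (μ : Measure Ω) [IsProbabilityMeasure μ] (hm : m ≤ mΩ) (A B : Ω → ℝ)
    (hA : Measurable A) (hB : Measurable B) (hAi : Integrable A μ) (hBi : Integrable B μ)
    (hABi : Integrable (A * B) μ) (h : CondIndepFun m hm A B μ) :
    μ[A * B|m] =ᵐ[μ] μ[A|m] * μ[B|m] := by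
  have h1 := ae_of_ae_trim hm ((condIndepFun_iff_map_prod_eq_prod_map_map hA hB).1 h)
  filter_upwards [h1, condExp_ae_eq_integral_condExpKernel hm hAi,
    condExp_ae_eq_integral_condExpKernel hm hBi,
    condExp_ae_eq_integral_condExpKernel hm hABi] with ω h1 h2 h3 h4
  rw [Kernel.map_apply _ (hA.prodMk hB), Kernel.prod_apply, Kernel.map_apply _ hA,
    Kernel.map_apply _ hB] at h1
  have hi : IndepFun A B (condExpKernel μ m ω) :=
    (indepFun_iff_map_prod_eq_prod_map_map hA.aemeasurable hB.aemeasurable).2 h1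
  rw [Pi.mul_apply, h2, h3, h4]
  exact hi.integral_mul_eq_mul_integral hA.aestronglyMeasurable hB.aestronglyMeasurable

/-- One arm of inverse probability weighting. -/
lemma ipw_arm {Ω : Type*} {m mΩ : MeasurableSpace Ω} [StandardBorelSpace Ω]
    (μ : Measure Ω) [IsProbabilityMeasure μ] (hm : m ≤ mΩ) (A B p : Ω → ℝ)
    (hA : Measurable A) (hB : Measurable B) (M : ℝ) (hAM : ∀ x, |A x| ≤ M)
    (hB1 : ∀ x, |B x| ≤ 1) (h : CondIndepFun m hm A B μ)
    (hp : Measurable[m] p) (c : ℝ) (hc : 0 < c) (hcp : ∀ x, c ≤ p x)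
    (hps : μ[B|m] =ᵐ[μ] p) :
    Integrable (fun x => B x * A x / p x) μ ∧ ∫ x, B x * A x / p x ∂μ = ∫ x, A x ∂μ := by
  have hAi : Integrable A μ := Integrable.of_bound hA.aestronglyMeasurable M (ae_of_all _ hAM)
  have hBi : Integrable B μ := Integrable.of_bound hB.aestronglyMeasurable 1 (ae_of_all _ hB1)
  have hABi : Integrable (A * B) μ :=
    hAi.mul_bdd hB.aestronglyMeasurable (ae_of_all _ hB1)
  have hpi : Measurable[m] (p⁻¹) := hp.inv
  have hABp : Integrable ((A * B) * p⁻¹) μ := by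
    refine hABi.mul_bdd (c := c⁻¹) (hpi.mono hm le_rfl).aestronglyMeasurable (ae_of_all _ fun x => ?_)
    have := hcp x
    rw [Pi.inv_apply, Real.norm_eq_abs, abs_inv, abs_of_pos (hc.trans_le this)]
    exact inv_anti₀ hc this
  have heq : (fun x => B x * A x / p x) = (A * B) * p⁻¹ := by
    funext x
    simp [div_eq_mul_inv, mul_comm (A x)]
  rw [heq]
  refine ⟨hABp, ?_⟩
  have h1 := condExp_mul_of_stronglyMeasurable_right hpi.stronglyMeasurable hABp hABi
  have h2 := condExp_mul_of_condIndepFun μ hm A B hA hB hAi hBi hABi h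
  rw [← integral_condExp hm, ← integral_condExp (f := A) hm]
  refine integral_congr_ae ?_
  filter_upwards [h1, h2, hps] with x h1 h2 h3
  have := hc.trans_le (hcp x)
  rw [h1, Pi.mul_apply, h2, Pi.mul_apply, h3, Pi.inv_apply]
  field_simp

/-- Identification of the average treatment effect by inverse probability weighting: under
unconfoundedness (conditional independence of the potential outcomes and treatment given the
σ-algebra generated by the covariates) and overlap, the IPW contrast equals `E[Y₁ − Y₀]`. -/
theorem stmt_18 {d : ℕ} {Ω : Type*} {mΩ : MeasurableSpace Ω} [StandardBorelSpace Ω]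
    (μ : Measure Ω) [IsProbabilityMeasure μ]
    (X : Ω → EuclideanSpace ℝ (Fin d)) (hX : Measurable X)
    (Z : Ω → ℝ) (hZmeas : Measurable Z) (hZ01 : ∀ x, Z x = 0 ∨ Z x = 1)
    (Y₀ Y₁ : Ω → ℝ) (hY₀meas : Measurable Y₀) (hY₁meas : Measurable Y₁)
    (hbdd : ∃ M : ℝ, ∀ x, |Y₀ x| ≤ M ∧ |Y₁ x| ≤ M)
    (Y : Ω → ℝ) (hY : ∀ x, Y x = Z x * Y₁ x + (1 - Z x) * Y₀ x)
    (e : EuclideanSpace ℝ (Fin d) → ℝ) (he : Measurable e)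
    (c : ℝ) (hc0 : 0 < c) (hchalf : c < 1 / 2)
    (hebd : ∀ v, c ≤ e v ∧ e v ≤ 1 - c)
    (hps : μ[Z|MeasurableSpace.comap X inferInstance] =ᵐ[μ] fun x => e (X x))
    (hunconf : CondIndepFun (MeasurableSpace.comap X inferInstance) hX.comap_le
      (fun x => (Y₀ x, Y₁ x)) Z μ) :
    (∫ x, (Z x * Y x / e (X x) - (1 - Z x) * Y x / (1 - e (X x))) ∂μ)
      = ∫ x, (Y₁ x - Y₀ x) ∂μ := by
  obtain ⟨M, hM⟩ := hbdd
  have heX : Measurable[MeasurableSpace.comap X inferInstance] (fun x => e (X x)) :=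
    he.comp (comap_measurable X)
  have hi1 : CondIndepFun (MeasurableSpace.comap X inferInstance) hX.comap_le Y₁ Z μ :=
    hunconf.comp measurable_snd measurable_id
  have hi0 : CondIndepFun (MeasurableSpace.comap X inferInstance) hX.comap_le Y₀
      (fun x => 1 - Z x) μ :=
    hunconf.comp measurable_fst (measurable_const.sub measurable_id : Measurable fun z : ℝ => 1 - z)
  have hZb : ∀ x, |Z x| ≤ 1 := fun x => by rcases hZ01 x with h | h <;> simp [h]
  have hZb' : ∀ x, |1 - Z x| ≤ 1 := fun x => by rcases hZ01 x with h | h <;> simp [h]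
  have hZi : Integrable Z μ := Integrable.of_bound hZmeas.aestronglyMeasurable 1 (ae_of_all _ hZb)
  have hps0 : μ[fun x => 1 - Z x|MeasurableSpace.comap X inferInstance]
      =ᵐ[μ] fun x => 1 - e (X x) := by
    have h1 := condExp_sub (integrable_const (μ := μ) (1 : ℝ)) hZi
      (MeasurableSpace.comap X inferInstance)
    rw [condExp_const hX.comap_le] at h1
    refine Filter.EventuallyEq.trans h1 ?_
    filter_upwards [hps] with x hx
    simp [hx]
  obtain ⟨I1, E1⟩ := ipw_arm μ hX.comap_le Y₁ Z (fun x => e (X x)) hY₁meas hZmeas M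
    (fun x => (hM x).2) hZb hi1 heX c hc0 (fun x => (hebd _).1) hps
  obtain ⟨I0, E0⟩ := ipw_arm μ hX.comap_le Y₀ (fun x => 1 - Z x) (fun x => 1 - e (X x)) hY₀meas
    (measurable_const.sub hZmeas) M (fun x => (hM x).1) hZb' hi0
    (measurable_const.sub heX) c hc0 (fun x => by linarith [(hebd (X x)).2]) hps0
  have hY1i : Integrable Y₁ μ :=
    Integrable.of_bound hY₁meas.aestronglyMeasurable M (ae_of_all _ fun x => (hM x).2)
  have hY0i : Integrable Y₀ μ :=
    Integrable.of_bound hY₀meas.aestronglyMeasurable M (ae_of_all _ fun x => (hM x).1)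
  rw [integral_sub hY1i hY0i, ← E1, ← E0, ← integral_sub I1 I0]
  congr 1
  funext x
  rcases hZ01 x with h | h <;> simp [hY, h]
end
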